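/- arXiv:2105.01320 — 2 statements merged into one kernel-verified Lean document; each statement's English description precedes it below -/
import Mathlib

section
/- Let E be a finite-dimensional real normed vector space, d > 0, μ a Borel measure on E that is finite on compact sets, satisfies μ({0}) = 0, and is homogeneous of degree d, F : E → ℝ a positive 1-homogeneous function, C ≥ 0 a real number, and (x_i)_{i ∈ ℕ} a sequence in E such that {i : F(x_i) ≤ R} is finite for every R > 0. Assume that for every continuous function g : E → ℝ with compact support contained in E \ {0}, lim_{L → ∞} L^{−d} Σ_{i ∈ ℕ} g(L^{−1} • x_i) = C · ∫_E g dμ. Then lim_{L → ∞} L^{−d} · #{i ∈ ℕ : F(x_i) ≤ L} = C · μ({x : F(x) ≤ 1}). -/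
/-!
Write `N L` for the number of indices with `F (x i) ≤ L` and `m = μ {F ≤ 1}`. Homogeneity gives
`μ {F ≤ t} = t ^ d * m`. The convergence hypothesis, applied to trapezoidal functions of `F`
(`exists_trapezoid`), squeezes the number of points in shells `{a L ≤ F ≤ b L}`.

* Lower bound (`eventually_le_count`): a trapezoid below the indicator of `{F ≤ 1}` shows that
  `N L ≥ K L ^ d` for large `L` whenever `K < C m ((1 - ε) ^ d - ε ^ d)`.
* Upper bound (`eventually_count_le`): a trapezoid above the indicator of `{ε ≤ F ≤ 1}` shows that
  `N L ≤ N (ε L) + K L ^ d` for large `L` whenever `K > C m (1 + ε) ^ d`.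

The test functions vanish near the origin, so they do not control by themselves how many of the
rescaled points accumulate at `0`. Iterating the second inequality handles this: the shells of
ratio `ε` add up to a geometric series, whence `N L ≤ B + K / (1 - ε ^ d) * L ^ d`
(`exists_bound_of_shell_bound`). As `ε → 0`, both
`C m ((1 - ε) ^ d - ε ^ d)` and `C m (1 + ε) ^ d / (1 - ε ^ d)` tend to `C m`.
-/

open MeasureTheory Set Filter Topology Pointwise

noncomputable section

variable {E : Type*} [NormedAddCommGroup E] [NormedSpace ℝ E]

/-- A Borel measure `μ` on `E` is *homogeneous of degree `d`* if
`μ(t • A) = t ^ d * μ(A)` for all `t > 0` and all Borel sets `A`. -/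
def IsHomogeneousMeasure [MeasurableSpace E] (μ : Measure E) (d : ℝ) : Prop :=
  ∀ t : ℝ, 0 < t → ∀ A : Set E, MeasurableSet A →
    μ (t • A) = ENNReal.ofReal (t ^ d) * μ A

/-- A function `F : E → ℝ` is a *positive 1-homogeneous function* if it is
continuous, positive away from `0`, and satisfies `F (t • x) = t * F x` for all
`t > 0`. -/
def IsPosHomogeneousFn (F : E → ℝ) : Prop :=
  Continuous F ∧ (∀ x : E, x ≠ 0 → 0 < F x) ∧
    ∀ t : ℝ, 0 < t → ∀ x : E, F (t • x) = t * F x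

/-! ### Sublevel sets and test functions -/

theorem IsPosHomogeneousFn.map_zero {F : E → ℝ} (hF : IsPosHomogeneousFn F) : F 0 = 0 := by
  have h := hF.2.2 2 two_pos 0
  rw [smul_zero] at h
  linarith

/-- Compactness of the unit sphere bounds `F` below by a multiple of the norm, so that sublevel
sets are bounded. -/
theorem IsPosHomogeneousFn.isCompact_sublevel [FiniteDimensional ℝ E] {F : E → ℝ}
    (hF : IsPosHomogeneousFn F) (t : ℝ) : IsCompact {y : E | F y ≤ t} := by
  have : ProperSpace E := FiniteDimensional.proper ℝ E
  obtain ⟨c, hc, hcF⟩ : ∃ c : ℝ, 0 < c ∧ ∀ y ∈ Metric.sphere (0 : E) 1, c ≤ F y :=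
    (isCompact_sphere (0 : E) 1).exists_forall_le' hF.1.continuousOn
      (fun y hy => hF.2.1 y (by rintro rfl; simp at hy))
  refine Metric.isCompact_of_isClosed_isBounded (isClosed_le hF.1 continuous_const)
    ((Metric.isBounded_closedBall (x := (0 : E)) (r := t / c)).subset fun y hy => ?_)
  rw [mem_closedBall_zero_iff, le_div_iff₀ hc]
  refine le_trans ?_ hy
  by_cases h0 : y = 0
  · simp [h0, hF.map_zero]
  have hn : 0 < ‖y‖ := norm_pos_iff.mpr h0
  have h1 := hcF (‖y‖⁻¹ • y) (by simp [norm_smul, hn.ne'])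
  rw [hF.2.2 _ (inv_pos.mpr hn), le_inv_mul_iff₀ hn] at h1
  exact h1

theorem real_sublevel [MeasurableSpace E] [BorelSpace E] {d : ℝ} {μ : Measure E}
    (hhom : IsHomogeneousMeasure μ d) {F : E → ℝ} (hF : IsPosHomogeneousFn F)
    {t : ℝ} (ht : 0 < t) :
    (μ {y : E | F y ≤ t}).toReal = t ^ d * (μ {y : E | F y ≤ 1}).toReal := by
  have hset : {y : E | F y ≤ t} = t • {y : E | F y ≤ 1} := by
    ext y
    rw [mem_smul_set_iff_inv_smul_mem₀ ht.ne', mem_ofPred_eq, mem_ofPred_eq,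
      hF.2.2 _ (inv_pos.mpr ht), inv_mul_le_iff₀ ht, mul_one]
  rw [hset, hhom t ht _ (isClosed_le hF.1 continuous_const).measurableSet, ENNReal.toReal_mul,
    ENNReal.toReal_ofReal (Real.rpow_nonneg ht.le d)]

/-- Admissible test functions: a trapezoidal function of `F`, equal to `1` on `{a ≤ F ≤ b}` and
vanishing outside `{a' ≤ F ≤ b'}`. -/
theorem exists_trapezoid [FiniteDimensional ℝ E] {F : E → ℝ} (hF : IsPosHomogeneousFn F)
    {a' a b b' : ℝ} (ha' : 0 < a') (ha : a' < a) (hb : b < b') :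
    ∃ g : E → ℝ, Continuous g ∧ HasCompactSupport g ∧ tsupport g ⊆ {(0 : E)}ᶜ ∧
      (∀ y, 0 ≤ g y) ∧ (∀ y, g y ≤ 1) ∧ (∀ y, a ≤ F y → F y ≤ b → g y = 1) ∧
      (∀ y, g y ≠ 0 → a' ≤ F y ∧ F y ≤ b') := by
  set g : E → ℝ := fun y =>
    max 0 (min 1 (min ((F y - a') / (a - a')) ((b' - F y) / (b' - b)))) with hg
  have hcont : Continuous F := hF.1
  have hsupp : ∀ y, g y ≠ 0 → a' ≤ F y ∧ F y ≤ b' := by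
    intro y hy
    by_contra hcon
    apply hy
    apply max_eq_left
    rw [not_and_or, not_le, not_le] at hcon
    rcases hcon with h | h
    · exact (min_le_right _ _).trans ((min_le_left _ _).trans
        (div_nonpos_of_nonpos_of_nonneg (by linarith) (by linarith)))
    · exact (min_le_right _ _).trans ((min_le_right _ _).trans
        (div_nonpos_of_nonpos_of_nonneg (by linarith) (by linarith)))
  have hts : tsupport g ⊆ {y | a' ≤ F y ∧ F y ≤ b'} :=
    closure_minimal hsupp
      ((isClosed_le continuous_const hcont).inter (isClosed_le hcont continuous_const))
  refine ⟨g, by fun_prop, ?_, ?_, fun y => le_max_left _ _,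
    fun y => max_le zero_le_one (min_le_left _ _), ?_, hsupp⟩
  · exact (hF.isCompact_sublevel b').of_isClosed_subset (isClosed_tsupport g)
      fun y hy => (hts hy).2
  · rintro y hy rfl
    have := (hts hy).1
    rw [hF.map_zero] at this
    linarith
  · intro y h1 h2
    have e1 : 1 ≤ (F y - a') / (a - a') := (one_le_div (by linarith)).mpr (by linarith)
    have e2 : 1 ≤ (b' - F y) / (b' - b) := (one_le_div (by linarith)).mpr (by linarith)
    simp [hg, e1, e2]

/-! ### Counting indices -/

/-- The number of indices `i` with `F (x i) ≤ L`, as a real number. -/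
def countLE (F : E → ℝ) (x : ℕ → E) (L : ℝ) : ℝ := (Nat.card {i : ℕ // F (x i) ≤ L} : ℝ)

section Counting

variable {F : E → ℝ} {x : ℕ → E}

theorem finite_sublevel (hfin : ∀ R : ℝ, 0 < R → {i : ℕ | F (x i) ≤ R}.Finite) (R : ℝ) :
    {i : ℕ | F (x i) ≤ R}.Finite :=
  (hfin (max R 1) (by positivity)).subset fun i (hi : F (x i) ≤ R) => hi.trans (le_max_left R 1)

theorem countLE_eq_ncard (L : ℝ) : countLE F x L = ({i : ℕ | F (x i) ≤ L}.ncard : ℝ) := rfl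

theorem countLE_mono (hfin : ∀ R : ℝ, 0 < R → {i : ℕ | F (x i) ≤ R}.Finite) :
    Monotone (countLE F x) := by
  intro L L' h
  rw [countLE_eq_ncard, countLE_eq_ncard]
  exact_mod_cast ncard_le_ncard (fun i (hi : F (x i) ≤ L) => hi.trans h) (finite_sublevel hfin L')

theorem tsum_le_countLE (hF : IsPosHomogeneousFn F)
    (hfin : ∀ R : ℝ, 0 < R → {i : ℕ | F (x i) ≤ R}.Finite) {g : E → ℝ} {b' L : ℝ}
    (hL : 0 < L) (hg1 : ∀ y, g y ≤ 1) (hgs : ∀ y, g y ≠ 0 → F y ≤ b') :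
    ∑' i : ℕ, g (L⁻¹ • x i) ≤ countLE F x (b' * L) := by
  have hS := finite_sublevel hfin (b' * L)
  rw [countLE_eq_ncard, ncard_eq_toFinset_card _ hS, tsum_eq_sum (s := hS.toFinset)]
  · calc _ ≤ ∑ i ∈ hS.toFinset, (1 : ℝ) := Finset.sum_le_sum fun i _ => hg1 _
      _ = _ := by simp
  · intro i hi
    by_contra hne
    have := hgs _ hne
    rw [hF.2.2 _ (inv_pos.mpr hL), inv_mul_le_iff₀ hL, mul_comm] at this
    exact hi (hS.mem_toFinset.mpr this)

theorem countLE_le_add_tsum (hF : IsPosHomogeneousFn F)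
    (hfin : ∀ R : ℝ, 0 < R → {i : ℕ | F (x i) ≤ R}.Finite) {g : E → ℝ} {a b' L : ℝ}
    (hL : 0 < L) (hg0 : ∀ y, 0 ≤ g y) (hg1 : ∀ y, a ≤ F y → F y ≤ 1 → g y = 1)
    (hgs : ∀ y, g y ≠ 0 → F y ≤ b') :
    countLE F x L ≤ countLE F x (a * L) + ∑' i : ℕ, g (L⁻¹ • x i) := by
  have hscale : ∀ i, F (L⁻¹ • x i) = L⁻¹ * F (x i) := fun i => hF.2.2 _ (inv_pos.mpr hL) _
  have hsum : Summable fun i => g (L⁻¹ • x i) := by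
    refine summable_of_hasFiniteSupport ((finite_sublevel hfin (b' * L)).subset fun i hi => ?_)
    have := hgs _ hi
    rwa [hscale, inv_mul_le_iff₀ hL, mul_comm] at this
  have hT : {i : ℕ | a * L < F (x i) ∧ F (x i) ≤ L}.Finite :=
    (finite_sublevel hfin L).subset fun i hi => hi.2
  have h1 : {i : ℕ | F (x i) ≤ L}.ncard ≤
      {i : ℕ | F (x i) ≤ a * L}.ncard + {i : ℕ | a * L < F (x i) ∧ F (x i) ≤ L}.ncard := by
    refine le_trans (ncard_le_ncard ?_ ((finite_sublevel hfin _).union hT)) (ncard_union_le _ _)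
    intro i hi
    rcases le_or_gt (F (x i)) (a * L) with h | h
    · exact Or.inl h
    · exact Or.inr ⟨h, hi⟩
  have h2 : ({i : ℕ | a * L < F (x i) ∧ F (x i) ≤ L}.ncard : ℝ) ≤ ∑' i, g (L⁻¹ • x i) := by
    rw [ncard_eq_toFinset_card _ hT]
    calc (hT.toFinset.card : ℝ) = ∑ i ∈ hT.toFinset, (1 : ℝ) := by simp
      _ = ∑ i ∈ hT.toFinset, g (L⁻¹ • x i) := by
        refine Finset.sum_congr rfl fun i hi => (hg1 _ ?_ ?_).symm
        · rw [hscale, le_inv_mul_iff₀ hL, mul_comm]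
          exact (hT.mem_toFinset.mp hi).1.le
        · rw [hscale, inv_mul_le_iff₀ hL, mul_one]
          exact (hT.mem_toFinset.mp hi).2
      _ ≤ _ := hsum.sum_le_tsum _ fun i _ => hg0 _
  rw [countLE_eq_ncard, countLE_eq_ncard]
  have h1' : ({i : ℕ | F (x i) ≤ L}.ncard : ℝ) ≤ ({i : ℕ | F (x i) ≤ a * L}.ncard : ℝ) +
    ({i : ℕ | a * L < F (x i) ∧ F (x i) ≤ L}.ncard : ℝ) := by exact_mod_cast h1
  linarith

end Counting

/-! ### Asymptotic bounds for the count -/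

/-- Summation of the shells: bounding `N L - N (ε L)` by `K L ^ d` along `L, ε L, ε² L, …` gives
a geometric series of ratio `ε ^ d`; `B` accounts for the range where the bound is not yet valid. -/
theorem exists_bound_of_shell_bound {N : ℝ → ℝ} (hN : Monotone N) {d ε K : ℝ} (hd : 0 < d)
    (hε : 0 < ε) (hε1 : ε < 1) (hK : 0 ≤ K)
    (h : ∀ᶠ L in atTop, N L ≤ N (ε * L) + K * L ^ d) :
    ∃ B : ℝ, ∀ᶠ L in atTop, N L ≤ B + K / (1 - ε ^ d) * L ^ d := by
  obtain ⟨L₁, hL₁⟩ := eventually_atTop.mp h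
  set L₀ := max L₁ 1
  have hL₀ : 0 < L₀ := by positivity
  have hq : 0 < 1 - ε ^ d := sub_pos.mpr (Real.rpow_lt_one hε.le hε1 hd)
  have key : ∀ n : ℕ, ∀ L : ℝ, 0 < L → ε ^ n * L ≤ L₀ →
      N L ≤ N L₀ + K / (1 - ε ^ d) * L ^ d := by
    intro n
    induction n with
    | zero =>
      intro L hL hle
      have := hN (by simpa using hle : L ≤ L₀)
      have : 0 ≤ K / (1 - ε ^ d) * L ^ d := by positivity
      linarith
    | succ n ih =>
      intro L hL hle
      rcases le_total L L₀ with hc | hc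
      · have := hN hc
        have : 0 ≤ K / (1 - ε ^ d) * L ^ d := by positivity
        linarith
      · have h1 := hL₁ L ((le_max_left _ _).trans hc)
        have h2 := ih (ε * L) (by positivity) (by rw [← mul_assoc, ← pow_succ]; exact hle)
        rw [Real.mul_rpow hε.le hL.le] at h2
        have h3 : K / (1 - ε ^ d) * (ε ^ d * L ^ d) + K * L ^ d = K / (1 - ε ^ d) * L ^ d := by
          field_simp
          ring
        linarith
  refine ⟨N L₀, (eventually_gt_atTop 0).mono fun L hL => ?_⟩
  obtain ⟨n, hn⟩ := exists_pow_lt_of_lt_one (div_pos hL₀ hL) hε1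
  exact key n L hL ((lt_div_iff₀ hL).mp hn).le

section Bounds

variable [FiniteDimensional ℝ E] [MeasurableSpace E] [BorelSpace E]
  {d : ℝ} {μ : Measure E} [IsFiniteMeasureOnCompacts μ] {F : E → ℝ} {C : ℝ} {x : ℕ → E}

/-- The trapezoid lies below the indicator of `{F ≤ 1 + ε}` and equals `1` on `{ε ≤ F ≤ 1}`, so its
sum counts every index in the shell, while its integral is at most `(1 + ε) ^ d * μ {F ≤ 1}`. -/
theorem eventually_count_le (hhom : IsHomogeneousMeasure μ d) (hF : IsPosHomogeneousFn F)
    (hC : 0 ≤ C) (hfin : ∀ R : ℝ, 0 < R → {i : ℕ | F (x i) ≤ R}.Finite)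
    (hconv : ∀ g : E → ℝ, Continuous g → HasCompactSupport g →
      tsupport g ⊆ {(0 : E)}ᶜ →
      Tendsto (fun L : ℝ => L ^ (-d) * ∑' i : ℕ, g (L⁻¹ • x i)) atTop
        (𝓝 (C * ∫ y, g y ∂μ)))
    {ε K : ℝ} (hε : 0 < ε) (hK : C * ((1 + ε) ^ d * (μ {y : E | F y ≤ 1}).toReal) < K) :
    ∀ᶠ L in atTop, countLE F x L ≤ countLE F x (ε * L) + K * L ^ d := by
  obtain ⟨g, hgc, hgk, hg0s, hg0, hg1, hgone, hgs⟩ :=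
    exists_trapezoid hF (half_pos hε) (half_lt_self hε) (by linarith : (1 : ℝ) < 1 + ε)
  have hcpt := hF.isCompact_sublevel (1 + ε)
  have hint : ∫ y, g y ∂μ ≤ (1 + ε) ^ d * (μ {y : E | F y ≤ 1}).toReal := by
    rw [← real_sublevel hhom hF (by linarith : 0 < 1 + ε)]
    calc ∫ y, g y ∂μ ≤ ∫ y, {y : E | F y ≤ 1 + ε}.indicator (fun _ => (1 : ℝ)) y ∂μ := by
          refine integral_mono (hgc.integrable_of_hasCompactSupport hgk)
            ((integrable_indicator_iff hcpt.measurableSet).mpr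
              (integrableOn_const hcpt.measure_lt_top.ne)) fun y => ?_
          by_cases hy : F y ≤ 1 + ε
          · rw [indicator_of_mem (by exact hy)]
            exact hg1 y
          · rw [indicator_of_notMem (by exact hy)]
            by_contra hlt
            exact hy (hgs y fun h0 => hlt h0.le).2
      _ = _ := by
          rw [integral_indicator_const _ hcpt.measurableSet]
          simp [Measure.real]
  filter_upwards [(hconv g hgc hgk hg0s).eventually_lt_const
    ((mul_le_mul_of_nonneg_left hint hC).trans_lt hK), eventually_gt_atTop 0] with L hL hL0
  rw [Real.rpow_neg hL0.le, inv_mul_lt_iff₀ (by positivity), mul_comm] at hL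
  have := countLE_le_add_tsum hF hfin hL0 hg0 hgone fun y hy => (hgs y hy).2
  linarith

/-- The trapezoid lies below the indicator of `{F ≤ 1}` and equals `1` on `{ε ≤ F ≤ 1 - ε}`, so its
sum is at most the count, while its integral is at least `μ {F ≤ 1 - ε} - μ {F ≤ ε}`. -/
theorem eventually_le_count (hhom : IsHomogeneousMeasure μ d) (hF : IsPosHomogeneousFn F)
    (hC : 0 ≤ C) (hfin : ∀ R : ℝ, 0 < R → {i : ℕ | F (x i) ≤ R}.Finite)
    (hconv : ∀ g : E → ℝ, Continuous g → HasCompactSupport g →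
      tsupport g ⊆ {(0 : E)}ᶜ →
      Tendsto (fun L : ℝ => L ^ (-d) * ∑' i : ℕ, g (L⁻¹ • x i)) atTop
        (𝓝 (C * ∫ y, g y ∂μ)))
    {ε K : ℝ} (hε : 0 < ε) (hε1 : ε < 1)
    (hK : K < C * (((1 - ε) ^ d - ε ^ d) * (μ {y : E | F y ≤ 1}).toReal)) :
    ∀ᶠ L in atTop, K * L ^ d ≤ countLE F x L := by
  obtain ⟨g, hgc, hgk, hg0s, hg0, hg1, hgone, hgs⟩ :=
    exists_trapezoid hF (half_pos hε) (half_lt_self hε) (by linarith : 1 - ε < (1 : ℝ))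
  have hcpt := hF.isCompact_sublevel (1 - ε)
  have hcpt' := hF.isCompact_sublevel ε
  have hi := (integrable_indicator_iff hcpt.measurableSet).mpr
    (integrableOn_const (μ := μ) (C := (1 : ℝ)) hcpt.measure_lt_top.ne)
  have hi' := (integrable_indicator_iff hcpt'.measurableSet).mpr
    (integrableOn_const (μ := μ) (C := (1 : ℝ)) hcpt'.measure_lt_top.ne)
  have hint : ((1 - ε) ^ d - ε ^ d) * (μ {y : E | F y ≤ 1}).toReal ≤ ∫ y, g y ∂μ := by
    rw [sub_mul, ← real_sublevel hhom hF (by linarith : 0 < 1 - ε), ← real_sublevel hhom hF hε]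
    calc _ = ∫ y, ({y : E | F y ≤ 1 - ε}.indicator (fun _ => (1 : ℝ)) y -
              {y : E | F y ≤ ε}.indicator (fun _ => (1 : ℝ)) y) ∂μ := by
          rw [integral_sub hi hi', integral_indicator_const _ hcpt.measurableSet,
            integral_indicator_const _ hcpt'.measurableSet]
          simp [Measure.real]
      _ ≤ _ := by
          refine integral_mono (hi.sub hi') (hgc.integrable_of_hasCompactSupport hgk) fun y => ?_
          have := hg0 y
          by_cases h1 : F y ≤ 1 - ε <;> by_cases h2 : F y ≤ ε <;>
            simp only [indicator, mem_ofPred_eq, h1, h2, if_true, if_false] <;> try linarith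
          rw [hgone y (not_le.mp h2).le h1]
          norm_num
  filter_upwards [(hconv g hgc hgk hg0s).eventually_const_lt
    (hK.trans_le (mul_le_mul_of_nonneg_left hint hC)), eventually_gt_atTop 0] with L hL hL0
  rw [Real.rpow_neg hL0.le, lt_inv_mul_iff₀ (by positivity), mul_comm] at hL
  have := tsum_le_countLE hF hfin hL0 hg1 fun y hy => (hgs y hy).2
  rw [one_mul] at this
  linarith

end Bounds

/-- (Abstract form of Mirzakhani's counting asymptotics.)
Suppose the rescaled counting measures `L^{-d} Σ_i δ_{x_i / L}` converge
weakly-* on `E \ {0}` to `C · μ`, where `μ` is homogeneous of degree `d > 0`,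
finite on compacts and null at `0`. Then
`L^{-d} · #{i : F(x_i) ≤ L} → C · μ({F ≤ 1})`. -/
theorem counting_asymptotics
    [FiniteDimensional ℝ E] [MeasurableSpace E] [BorelSpace E]
    (d : ℝ) (hd : 0 < d) (μ : Measure E) [IsFiniteMeasureOnCompacts μ]
    (hzero : μ {(0 : E)} = 0) (hhom : IsHomogeneousMeasure μ d)
    (F : E → ℝ) (hF : IsPosHomogeneousFn F)
    (C : ℝ) (hC : 0 ≤ C) (x : ℕ → E)
    (hfin : ∀ R : ℝ, 0 < R → {i : ℕ | F (x i) ≤ R}.Finite)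
    (hconv : ∀ g : E → ℝ, Continuous g → HasCompactSupport g →
      tsupport g ⊆ {(0 : E)}ᶜ →
      Tendsto (fun L : ℝ => L ^ (-d) * ∑' i : ℕ, g (L⁻¹ • x i)) atTop
        (𝓝 (C * ∫ y, g y ∂μ))) :
    Tendsto
      (fun L : ℝ => L ^ (-d) * (Nat.card {i : ℕ // F (x i) ≤ L} : ℝ))
      atTop (𝓝 (C * (μ {x : E | F x ≤ 1}).toReal)) := by
  change Tendsto (fun L : ℝ => L ^ (-d) * countLE F x L) atTop _
  set m := (μ {x : E | F x ≤ 1}).toReal with hm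
  have hm0 : 0 ≤ m := ENNReal.toReal_nonneg
  have hsmall : ∀ᶠ ε : ℝ in 𝓝[>] 0, 0 < ε ∧ ε < 1 :=
    Ioo_mem_nhdsGT zero_lt_one
  have hpow0 : ContinuousAt (fun ε : ℝ => ε ^ d) 0 :=
    Real.continuousAt_rpow_const _ _ (Or.inr hd.le)
  have hz : (0 : ℝ) ^ d = 0 := Real.zero_rpow hd.ne'
  refine tendsto_order.mpr ⟨fun K hK => ?_, fun K hK => ?_⟩
  · have hlim : Tendsto (fun ε : ℝ => C * (((1 - ε) ^ d - ε ^ d) * m)) (𝓝[>] 0) (𝓝 (C * m)) := by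
      have hc : ContinuousAt (fun ε : ℝ => C * (((1 - ε) ^ d - ε ^ d) * m)) 0 := by
        have : ContinuousAt (fun ε : ℝ => (1 - ε) ^ d) 0 :=
          (continuousAt_const.sub continuousAt_id).rpow_const (Or.inr hd.le)
        fun_prop
      have := hc.tendsto.mono_left (nhdsWithin_le_nhds (s := Ioi 0))
      simpa [hz] using this
    obtain ⟨K', hKK', hK'⟩ := exists_between hK
    obtain ⟨ε, hε, hε0, hε1⟩ := ((hlim.eventually_const_lt hK').and hsmall).exists
    filter_upwards [eventually_le_count hhom hF hC hfin hconv hε0 hε1 hε,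
      eventually_gt_atTop 0] with L hL hL0
    rw [Real.rpow_neg hL0.le, lt_inv_mul_iff₀ (by positivity), mul_comm]
    have : K * L ^ d < K' * L ^ d := by gcongr
    linarith
  -- The shell bound is used with `C m (1 + ε) ^ d + ε`, strictly above its threshold.
  · have hlim : Tendsto (fun ε : ℝ => (C * ((1 + ε) ^ d * m) + ε) / (1 - ε ^ d))
        (𝓝[>] 0) (𝓝 (C * m)) := by
      have hc : ContinuousAt (fun ε : ℝ => (C * ((1 + ε) ^ d * m) + ε) / (1 - ε ^ d)) 0 := by
        have : ContinuousAt (fun ε : ℝ => (1 + ε) ^ d) 0 :=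
          (continuousAt_const.add continuousAt_id).rpow_const (Or.inr hd.le)
        exact ContinuousAt.div (by fun_prop) (by fun_prop) (by simp [hz])
      have := hc.tendsto.mono_left (nhdsWithin_le_nhds (s := Ioi 0))
      simpa [hz] using this
    obtain ⟨ε, hε, hε0, hε1⟩ := ((hlim.eventually_lt_const hK).and hsmall).exists
    obtain ⟨B, hB⟩ := exists_bound_of_shell_bound (countLE_mono hfin) hd hε0 hε1
      (by positivity) (eventually_count_le hhom hF hC hfin hconv hε0 (lt_add_of_pos_right _ hε0))
    -- The constant `B` is absorbed because `L ^ d → ∞`.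
    have hBlim : ∀ᶠ L : ℝ in atTop,
        B < (K - (C * ((1 + ε) ^ d * m) + ε) / (1 - ε ^ d)) * L ^ d :=
      ((tendsto_rpow_atTop hd).const_mul_atTop (sub_pos.mpr hε)).eventually_gt_atTop B
    filter_upwards [hB, hBlim, eventually_gt_atTop 0] with L hL hL' hL0
    rw [Real.rpow_neg hL0.le, inv_mul_lt_iff₀ (by positivity), mul_comm]
    linarith
end
end

section
/- Let E be a finite-dimensional real normed vector space, d > 0, μ a Borel measure on E that is finite on compact sets, satisfies μ({0}) = 0, is homogeneous of degree d, and satisfies μ({x : F(x) ≤ 1}) > 0, where F : E → ℝ is a positive 1-homogeneous function. Let C > 0 and let (x_i)_{i ∈ ℕ} be a sequence in E such that {i : F(x_i) ≤ R} is finite for every R > 0, and assume that for every continuous function g : E → ℝ with compact support contained in E \ {0}, lim_{L → ∞} L^{−d} Σ_{i ∈ ℕ} g(L^{−1} • x_i) = C · ∫_E g dμ. Then for every continuous function h : E → ℝ satisfying h(t • x) = t · h(x) for all t > 0 and x ∈ E, lim_{L → ∞} (Σ_{i : F(x_i) ≤ L} h(x_i)) / (Σ_{i : F(x_i) ≤ L}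 F(x_i)) = (∫_{{F ≤ 1}} h dμ) / (∫_{{F ≤ 1}} F dμ). -/
/-!
The ratio is unchanged when numerator and denominator are multiplied by `L ^ (-(d + 1))`, so it
suffices to show `L ^ (-(d + 1)) * ∑_{F (x i) ≤ L} h (x i) → C * ∫_{F ≤ 1} h dμ` for every
continuous 1-homogeneous `h`; by 1-homogeneity the left side is the pairing of the rescaled
counting measure with `h * 1_{F ≤ 1}`. This is not an admissible test function for two reasons.

* It does not vanish near the origin. A dyadic decomposition gives
  `∑_{F (x i) ≤ L} F (x i) ≤ A + K * L ^ (d + 1)` (`truncSum_growth`), and since `|h| ≤ M * F`, the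
  points with `F (x i) ≤ ε * L` contribute only `O(ε ^ (d + 1))` in the limit. Hence the
  convergence holds for all compactly supported continuous functions that are `O(F)`
  (`VagueConv.extend`).
* It is discontinuous along `{F = 1}`. For `h ≥ 0` the indicator is squeezed between a continuous
  cutoff and a slight dilate of that cutoff (`VagueConv.truncSum_nonneg`), and dilating only
  rescales `L`. The general case follows from `h = (h + M * F) - M * F`.

Finally `∫_{F ≤ 1} F dμ > 0`, because `F` is positive off the `μ`-null set `{0}` and
`μ {F ≤ 1} > 0`.
-/

open MeasureTheory Set Filter Topology Pointwise

noncomputable section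

variable {E : Type*} [NormedAddCommGroup E] [NormedSpace ℝ E]

/-! ### Rescaled and truncated sums -/

/-- The pairing of a test function `g` with the rescaled counting measure
`L ^ (-d) * ∑ i, δ_{x i / L}`. -/
def scaledSum (x : ℕ → E) (d : ℝ) (g : E → ℝ) (L : ℝ) : ℝ :=
  L ^ (-d) * ∑' i : ℕ, g (L⁻¹ • x i)

/-- The sum of `h` over the points of the sequence with `F`-value at most `L`. -/
def truncSum (F : E → ℝ) (x : ℕ → E) (h : E → ℝ) (L : ℝ) : ℝ :=
  ∑' i : ℕ, if F (x i) ≤ L then h (x i) else 0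

/-- Vague convergence of the rescaled counting measures to `C • μ` on `E \ {0}`, i.e. tested
against continuous functions with compact support avoiding the origin. -/
def VagueConv [MeasurableSpace E] (x : ℕ → E) (d C : ℝ) (μ : Measure E) : Prop :=
  ∀ g : E → ℝ, Continuous g → HasCompactSupport g → tsupport g ⊆ {(0 : E)}ᶜ →
    Tendsto (scaledSum x d g) atTop (𝓝 (C * ∫ y, g y ∂μ))

/-! ### Positively homogeneous functions -/

lemma posHom_zero {F : E → ℝ} (hF : ∀ t : ℝ, 0 < t → ∀ y : E, F (t • y) = t * F y) :
    F 0 = 0 := by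
  have := hF 2 two_pos 0
  rw [smul_zero] at this
  linarith

lemma IsPosHomogeneousFn.nonneg {F : E → ℝ} (hF : IsPosHomogeneousFn F) (y : E) : 0 ≤ F y := by
  by_cases hy : y = 0
  · rw [hy, posHom_zero hF.2.2]
  · exact (hF.2.1 y hy).le

lemma IsPosHomogeneousFn.exists_mul_norm_le [FiniteDimensional ℝ E] {F : E → ℝ}
    (hF : IsPosHomogeneousFn F) : ∃ c : ℝ, 0 < c ∧ ∀ y, c * ‖y‖ ≤ F y := by
  obtain ⟨c, hc, hcF⟩ := (isCompact_sphere (0 : E) 1).exists_forall_le' (a := 0)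
    hF.1.continuousOn (fun b hb => hF.2.1 b (by
      rintro rfl
      simp at hb))
  refine ⟨c, hc, fun y => ?_⟩
  by_cases hy : y = 0
  · simp [hy, posHom_zero hF.2.2]
  · have hn : 0 < ‖y‖ := norm_pos_iff.2 hy
    have h1 := hcF (‖y‖⁻¹ • y) (by simp [norm_smul, hn.ne'])
    rw [hF.2.2 _ (inv_pos.2 hn)] at h1
    calc c * ‖y‖ ≤ (‖y‖⁻¹ * F y) * ‖y‖ := by gcongr
      _ = F y := by field_simp

lemma IsPosHomogeneousFn.isCompact_le [FiniteDimensional ℝ E] {F : E → ℝ}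
    (hF : IsPosHomogeneousFn F) (R : ℝ) : IsCompact {y | F y ≤ R} := by
  obtain ⟨c, hc, h⟩ := hF.exists_mul_norm_le
  refine (isCompact_closedBall (0 : E) (R / c)).of_isClosed_subset
    (isClosed_le hF.1 continuous_const) fun y hy => ?_
  rw [mem_closedBall_zero_iff, le_div_iff₀ hc, mul_comm]
  exact (h y).trans hy

/-- By compactness of the unit sphere, every continuous positively 1-homogeneous function is
dominated by a multiple of `F`. -/
lemma IsPosHomogeneousFn.exists_abs_le [FiniteDimensional ℝ E] {F : E → ℝ}
    (hF : IsPosHomogeneousFn F) {h : E → ℝ} (hcont : Continuous h)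
    (hhomog : ∀ t : ℝ, 0 < t → ∀ y : E, h (t • y) = t * h y) :
    ∃ M : ℝ, 0 ≤ M ∧ ∀ y, |h y| ≤ M * F y := by
  obtain ⟨c, hc, hcF⟩ := hF.exists_mul_norm_le
  obtain ⟨B, hB⟩ := (isCompact_sphere (0 : E) 1).exists_bound_of_continuousOn hcont.continuousOn
  have key : ∀ y, |h y| ≤ |B| * ‖y‖ := by
    intro y
    by_cases hy : y = 0
    · simp [hy, posHom_zero hhomog]
    · have hn : 0 < ‖y‖ := norm_pos_iff.2 hy
      have h1 := hB (‖y‖⁻¹ • y) (by simp [norm_smul, hn.ne'])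
      rw [hhomog _ (inv_pos.2 hn), Real.norm_eq_abs, abs_mul, abs_of_pos (inv_pos.2 hn)] at h1
      calc |h y| = (‖y‖⁻¹ * |h y|) * ‖y‖ := by field_simp
        _ ≤ |B| * ‖y‖ := by
          gcongr
          exact h1.trans (le_abs_self B)
  refine ⟨|B| / c, by positivity, fun y => (key y).trans ?_⟩
  calc |B| * ‖y‖ = |B| / c * (c * ‖y‖) := by field_simp
    _ ≤ |B| / c * F y := by gcongr; exact hcF y

/-! ### Test functions and finiteness of the sums -/

lemma summable_trunc {α : Type*} {F : α → ℝ} {x : ℕ → α}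
    (hfin : ∀ R : ℝ, 0 < R → {i : ℕ | F (x i) ≤ R}.Finite) (h : α → ℝ) {L : ℝ} (hL : 0 < L) :
    Summable fun i : ℕ => if F (x i) ≤ L then h (x i) else 0 := by
  refine summable_of_hasFiniteSupport ((hfin L hL).subset fun i hi => ?_)
  by_contra hcon
  exact hi (if_neg hcon)

lemma summable_scaled {F : E → ℝ} (hF : IsPosHomogeneousFn F) {x : ℕ → E}
    (hfin : ∀ R : ℝ, 0 < R → {i : ℕ | F (x i) ≤ R}.Finite) {g : E → ℝ} {b : ℝ}
    (hb : ∀ y, g y ≠ 0 → F y ≤ b) {L : ℝ} (hL : 0 < L) :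
    Summable fun i : ℕ => g (L⁻¹ • x i) := by
  refine summable_of_hasFiniteSupport ((hfin (L * max b 1) (by positivity)).subset fun i hi => ?_)
  have h1 := hb _ hi
  rw [hF.2.2 _ (inv_pos.2 hL), inv_mul_le_iff₀ hL] at h1
  exact h1.trans (by gcongr; exact le_max_left _ _)

lemma hasCompactSupport_of_le [FiniteDimensional ℝ E] {F : E → ℝ} (hF : IsPosHomogeneousFn F)
    {g : E → ℝ} {b : ℝ} (hb : ∀ y, g y ≠ 0 → F y ≤ b) : HasCompactSupport g :=
  HasCompactSupport.intro (hF.isCompact_le b) fun y hy => by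
    by_contra hcon
    exact hy (hb y hcon)

lemma VagueConv.annulus [FiniteDimensional ℝ E] [MeasurableSpace E] {μ : Measure E}
    {F : E → ℝ} (hF : IsPosHomogeneousFn F) {x : ℕ → E} {d C : ℝ} (hconv : VagueConv x d C μ)
    {g : E → ℝ} (hg : Continuous g) {a b : ℝ} (ha : 0 < a)
    (hab : ∀ y, g y ≠ 0 → a ≤ F y ∧ F y ≤ b) :
    Tendsto (scaledSum x d g) atTop (𝓝 (C * ∫ y, g y ∂μ)) := by
  refine hconv g hg (hasCompactSupport_of_le hF fun y hy => (hab y hy).2) ?_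
  have h1 : tsupport g ⊆ {y | a ≤ F y} :=
    closure_minimal (fun y hy => (hab y hy).1) (isClosed_le continuous_const hF.1)
  rintro y hy rfl
  have := h1 hy
  rw [mem_ofPred_eq, posHom_zero hF.2.2] at this
  linarith

/-! ### Growth of the truncated sums -/

/-- Growth bound for the truncated sums of `F`. A bump function equal to at least `1` on
`{1/2 ≤ F ≤ 1}` bounds the contribution of each dyadic shell `{L/2 < F ≤ L}` by a multiple of
`L ^ (d + 1)`; these bounds are summed geometrically down to a fixed scale. -/
lemma truncSum_growth [FiniteDimensional ℝ E] [MeasurableSpace E] {μ : Measure E}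
    {F : E → ℝ} (hF : IsPosHomogeneousFn F) {x : ℕ → E} {d C : ℝ} (hd : 0 < d)
    (hfin : ∀ R : ℝ, 0 < R → {i : ℕ | F (x i) ≤ R}.Finite) (hconv : VagueConv x d C μ) :
    ∃ A K : ℝ, 0 ≤ A ∧ 0 ≤ K ∧ ∀ L : ℝ, 0 < L → truncSum F x F L ≤ A + K * L ^ (d + 1) := by
  set g : E → ℝ := fun y => max 0 (min (4 * F y - 1) (3 - 2 * F y)) with hgdef
  have hg0 : ∀ y, 0 ≤ g y := fun y => le_max_left _ _
  have hFc := hF.1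
  have hgc : Continuous g := by fun_prop
  have hab : ∀ y, g y ≠ 0 → (1 / 4 : ℝ) ≤ F y ∧ F y ≤ 3 / 2 := by
    intro y hy
    have h1 : 0 < g y := lt_of_le_of_ne (hg0 y) hy.symm
    simp only [hgdef, lt_max_iff, lt_self_iff_false, false_or, lt_min_iff] at h1
    constructor <;> linarith [h1.1, h1.2]
  have hlim := hconv.annulus hF hgc (by norm_num) hab
  obtain ⟨L₀, hL₀⟩ := eventually_atTop.1 (hlim.eventually_le_const (lt_add_one _))
  set K : ℝ := |C * ∫ y, g y ∂μ + 1|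
  set L₁ : ℝ := max L₀ 1
  have hL₁ : 0 < L₁ := by positivity
  have hbump : ∀ L : ℝ, L₁ ≤ L → ∑' i, g (L⁻¹ • x i) ≤ K * L ^ d := by
    intro L hL
    have hLp : 0 < L := hL₁.trans_le hL
    have h1 : scaledSum x d g L ≤ K := (hL₀ L ((le_max_left _ _).trans hL)).trans (le_abs_self _)
    rw [scaledSum, Real.rpow_neg hLp.le, inv_mul_le_iff₀ (by positivity)] at h1
    linarith
  have hshell : ∀ L : ℝ, L₁ ≤ L → truncSum F x F L ≤ truncSum F x F (L / 2) + K * L ^ (d + 1) := by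
    intro L hL
    have hLp : 0 < L := hL₁.trans_le hL
    have hsg := summable_scaled hF hfin (fun y hy => (hab y hy).2) hLp
    have hs2 := summable_trunc hfin F (half_pos hLp)
    calc truncSum F x F L
        ≤ ∑' i, ((if F (x i) ≤ L / 2 then F (x i) else 0) + L * g (L⁻¹ • x i)) := by
          refine (summable_trunc hfin F hLp).tsum_le_tsum (fun i => ?_)
            (hs2.add (hsg.mul_left L))
          have hn := hF.nonneg (x i)
          have hgn := mul_nonneg hLp.le (hg0 (L⁻¹ • x i))
          by_cases h1 : F (x i) ≤ L / 2
          · rw [if_pos h1, if_pos (h1.trans (half_le_self hLp.le))]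
            linarith
          · rw [if_neg h1]
            by_cases h2 : F (x i) ≤ L
            · rw [if_pos h2, zero_add]
              have h3 : 1 ≤ g (L⁻¹ • x i) := by
                have h4 : F (L⁻¹ • x i) = F (x i) / L := by
                  rw [hF.2.2 _ (inv_pos.2 hLp)]
                  ring
                have h5 : 1 / 2 ≤ F (x i) / L := by
                  rw [le_div_iff₀ hLp]
                  linarith
                have h6 : F (x i) / L ≤ 1 := (div_le_one hLp).2 h2
                simp only [hgdef, h4]
                exact le_max_of_le_right (le_min (by linarith) (by linarith))
              nlinarith
            · rw [if_neg h2, zero_add]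
              exact hgn
      _ = truncSum F x F (L / 2) + L * ∑' i, g (L⁻¹ • x i) := by
          rw [hs2.tsum_add (hsg.mul_left L), tsum_mul_left]
          rfl
      _ ≤ truncSum F x F (L / 2) + L * (K * L ^ d) := by
          gcongr
          exact hbump L hL
      _ = truncSum F x F (L / 2) + K * L ^ (d + 1) := by
          rw [Real.rpow_add_one hLp.ne']
          ring
  have hK : 0 ≤ K := abs_nonneg _
  have hA : 0 ≤ truncSum F x F L₁ :=
    tsum_nonneg fun i => by split_ifs; exacts [hF.nonneg _, le_rfl]
  refine ⟨truncSum F x F L₁, 2 * K, hA, by positivity, fun L hL => ?_⟩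
  have hind : ∀ n : ℕ, ∀ L : ℝ, 0 < L → L ≤ 2 ^ n * L₁ →
      truncSum F x F L ≤ truncSum F x F L₁ + 2 * K * L ^ (d + 1) := by
    have hsmall : ∀ L : ℝ, 0 < L → L ≤ L₁ →
        truncSum F x F L ≤ truncSum F x F L₁ + 2 * K * L ^ (d + 1) := by
      intro L hL hLL
      have h1 : truncSum F x F L ≤ truncSum F x F L₁ := by
        refine (summable_trunc hfin F hL).tsum_le_tsum (fun i => ?_) (summable_trunc hfin F hL₁)
        by_cases h1 : F (x i) ≤ L
        · rw [if_pos h1, if_pos (h1.trans hLL)]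
        · rw [if_neg h1]
          split_ifs
          exacts [hF.nonneg _, le_rfl]
      have : 0 ≤ 2 * K * L ^ (d + 1) := by positivity
      linarith
    intro n
    induction n with
    | zero => intro L hL h1; exact hsmall L hL (by simpa using h1)
    | succ n ih =>
      intro L hL h1
      rcases le_total L L₁ with hLL | hLL
      · exact hsmall L hL hLL
      have h2 := ih (L / 2) (half_pos hL) (by rw [pow_succ] at h1; linarith)
      have h3 := hshell L hLL
      have h4 : (L / 2) ^ (d + 1) ≤ L ^ (d + 1) / 2 := by
        rw [Real.div_rpow hL.le two_pos.le]
        have : (2 : ℝ) ≤ 2 ^ (d + 1) := by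
          conv_lhs => rw [← Real.rpow_one 2]
          exact Real.rpow_le_rpow_of_exponent_le one_le_two (by linarith)
        gcongr
      have h5 := mul_le_mul_of_nonneg_left h4 (by positivity : 0 ≤ 2 * K)
      linarith
  obtain ⟨n, hn⟩ := pow_unbounded_of_one_lt (L / L₁) (one_lt_two (α := ℝ))
  exact hind n L hL ((div_lt_iff₀ hL₁).1 hn).le

/-! ### Test functions not vanishing near the origin -/

/-- The vague convergence extends to compactly supported test functions that do not vanish near
the origin, provided they are `O(F)`: cutting off `{F ≤ ε}` changes the scaled sum by
`O(ε ^ (d + 1))`, by the growth bound. -/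
lemma VagueConv.extend [FiniteDimensional ℝ E] [MeasurableSpace E] [BorelSpace E]
    {μ : Measure E} [IsFiniteMeasureOnCompacts μ]
    {F : E → ℝ} (hF : IsPosHomogeneousFn F) {x : ℕ → E} {d C : ℝ} (hd : 0 < d)
    (hfin : ∀ R : ℝ, 0 < R → {i : ℕ | F (x i) ≤ R}.Finite) (hconv : VagueConv x d C μ)
    {g : E → ℝ} (hg : Continuous g) {M b : ℝ} (hM : 0 ≤ M) (hgF : ∀ y, |g y| ≤ M * F y)
    (hb : ∀ y, g y ≠ 0 → F y ≤ b) :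
    Tendsto (scaledSum x d g) atTop (𝓝 (C * ∫ y, g y ∂μ)) := by
  obtain ⟨A, K, hA, hK, hgrow⟩ := truncSum_growth hF hd hfin hconv
  have hFc := hF.1
  set ε : ℕ → ℝ := fun n => 1 / ((n : ℝ) + 1) with hεdef
  have hε : ∀ n, 0 < ε n := fun n => by positivity
  have hε0 : Tendsto ε atTop (𝓝 0) := tendsto_one_div_add_atTop_nhds_zero_nat
  set η : ℕ → E → ℝ := fun n y => max 0 (min 1 (F y / ε n - 1)) with hηdef
  have hη0 : ∀ n y, 0 ≤ η n y := fun n y => le_max_left _ _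
  have hη1 : ∀ n y, η n y ≤ 1 := fun n y => max_le zero_le_one (min_le_left _ _)
  have hη_one : ∀ n y, 2 * ε n ≤ F y → η n y = 1 := by
    intro n y hy
    have : 2 ≤ F y / ε n := (le_div_iff₀ (hε n)).2 hy
    simp only [hηdef]
    rw [min_eq_left (by linarith), max_eq_right zero_le_one]
  have hη_supp : ∀ n y, η n y ≠ 0 → ε n ≤ F y := by
    intro n y hy
    have h1 : 0 < η n y := lt_of_le_of_ne (hη0 n y) hy.symm
    simp only [hηdef, lt_max_iff, lt_self_iff_false, false_or, lt_min_iff] at h1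
    exact (one_le_div (hε n)).1 (by linarith [h1.2])
  have hηc : ∀ n, Continuous (η n) := fun n => by fun_prop
  have hlim : ∀ n, Tendsto (scaledSum x d fun y => g y * η n y) atTop
      (𝓝 (C * ∫ y, g y * η n y ∂μ)) := fun n =>
    hconv.annulus hF (hg.mul (hηc n)) (hε n) fun y hy =>
      ⟨hη_supp n y (right_ne_zero_of_mul hy), hb y (left_ne_zero_of_mul hy)⟩
  have hint : Tendsto (fun n => C * ∫ y, g y * η n y ∂μ) atTop (𝓝 (C * ∫ y, g y ∂μ)) := by
    refine Tendsto.const_mul C (tendsto_integral_of_dominated_convergence (fun y => ‖g y‖)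
      (fun n => (hg.mul (hηc n)).aestronglyMeasurable)
      (hg.integrable_of_hasCompactSupport (hasCompactSupport_of_le hF hb)).norm
      (fun n => ae_of_all _ fun y => ?_) (ae_of_all _ fun y => ?_))
    · rw [norm_mul, Real.norm_eq_abs (η n y), abs_of_nonneg (hη0 n y)]
      exact mul_le_of_le_one_right (norm_nonneg _) (hη1 n y)
    · rcases (hF.nonneg y).eq_or_lt with h0 | h0
      · have : g y = 0 := by
          have := hgF y
          rw [← h0, mul_zero] at this
          exact abs_eq_zero.1 (le_antisymm this (abs_nonneg _))
        simp [this]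
      · have h1 : Tendsto (fun n => 2 * ε n) atTop (𝓝 0) := by simpa using hε0.const_mul 2
        refine tendsto_const_nhds.congr' ?_
        filter_upwards [h1.eventually_le_const h0] with n hn
        rw [hη_one n y hn, mul_one]
  have herr : ∀ n, ∀ L : ℝ, 0 < L →
      |scaledSum x d g L - scaledSum x d (fun y => g y * η n y) L| ≤
        M * A * L ^ (-(d + 1)) + M * K * (2 * ε n) ^ (d + 1) := by
    intro n L hL
    have hs1 := summable_scaled hF hfin hb hL
    have hb2 : ∀ y, g y * η n y ≠ 0 → F y ≤ b := fun y hy => hb y (left_ne_zero_of_mul hy)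
    have hs2 := summable_scaled hF hfin hb2 hL
    have h2ε : 0 < 2 * ε n * L := by have := hε n; positivity
    have hbd : ∀ i, ‖g (L⁻¹ • x i) - g (L⁻¹ • x i) * η n (L⁻¹ • x i)‖ ≤
        M * L⁻¹ * (if F (x i) ≤ 2 * ε n * L then F (x i) else 0) := by
      intro i
      have hFi := hF.2.2 _ (inv_pos.2 hL) (x i)
      by_cases h1 : F (x i) ≤ 2 * ε n * L
      · rw [if_pos h1, mul_assoc, ← hFi, ← mul_one_sub, norm_mul, Real.norm_eq_abs,
          Real.norm_eq_abs, abs_of_nonneg (sub_nonneg.2 (hη1 n _))]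
        exact (mul_le_of_le_one_right (abs_nonneg _) (by linarith [hη0 n (L⁻¹ • x i)])).trans
          (hgF _)
      · rw [if_neg h1, hη_one, mul_one, sub_self, norm_zero, mul_zero]
        rw [hFi, ← div_eq_inv_mul, le_div_iff₀ hL]
        exact (not_le.1 h1).le
    have hsT := (summable_trunc hfin F h2ε).mul_left (M * L⁻¹)
    have hsum : |∑' i, g (L⁻¹ • x i) - ∑' i, g (L⁻¹ • x i) * η n (L⁻¹ • x i)| ≤
        M * L⁻¹ * truncSum F x F (2 * ε n * L) := by
      rw [← hs1.tsum_sub hs2, ← Real.norm_eq_abs, truncSum, ← tsum_mul_left]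
      exact tsum_of_norm_bounded hsT.hasSum hbd
    rw [scaledSum, scaledSum, ← mul_sub, abs_mul, abs_of_pos (Real.rpow_pos_of_pos hL _)]
    have hpw : L ^ (-d) * L⁻¹ = L ^ (-(d + 1)) := by
      rw [neg_add, Real.rpow_add hL, Real.rpow_neg_one]
    have hpw2 : L ^ (-(d + 1)) * L ^ (d + 1) = 1 := by
      rw [← Real.rpow_add hL, neg_add_cancel, Real.rpow_zero]
    calc _ ≤ L ^ (-d) * (M * L⁻¹ * (A + K * (2 * ε n * L) ^ (d + 1))) := by
          gcongr
          refine hsum.trans ?_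
          gcongr
          exact hgrow _ h2ε
      _ = M * A * (L ^ (-d) * L⁻¹) +
            M * K * (2 * ε n) ^ (d + 1) * (L ^ (-d) * L⁻¹ * L ^ (d + 1)) := by
          rw [Real.mul_rpow (by have := hε n; positivity) hL.le]
          ring
      _ = _ := by rw [hpw, hpw2, mul_one]
  rw [Metric.tendsto_nhds]
  intro e he
  have hpow : Tendsto (fun n => M * K * (2 * ε n) ^ (d + 1)) atTop (𝓝 0) := by
    have h1 : Tendsto (fun n => 2 * ε n) atTop (𝓝 0) := by simpa using hε0.const_mul 2
    have h2 := (h1.rpow_const (Or.inr (by linarith : 0 ≤ d + 1))).const_mul (M * K)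
    rwa [Real.zero_rpow (by linarith), mul_zero] at h2
  obtain ⟨n, hn1, hn2⟩ := ((Metric.tendsto_nhds.1 hint (e / 4) (by positivity)).and
    (hpow.eventually_lt_const (by positivity : 0 < e / 4))).exists
  have hdec : Tendsto (fun L : ℝ => M * A * L ^ (-(d + 1))) atTop (𝓝 0) := by
    simpa using (tendsto_rpow_neg_atTop (by linarith : 0 < d + 1)).const_mul (M * A)
  filter_upwards [eventually_gt_atTop 0, Metric.tendsto_nhds.1 (hlim n) (e / 4) (by positivity),
    hdec.eventually_lt_const (by positivity : 0 < e / 4)] with L hL h1 h2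
  have h3 := herr n L hL
  rw [Real.dist_eq] at *
  rw [abs_lt] at *
  rw [abs_le] at h3
  constructor <;> linarith [h3.1, h3.2, h1.1, h1.2, hn1.1, hn1.2]

/-! ### Removing the discontinuity along `F = 1` -/

/-- Asymptotics of the truncated sums of a nonnegative `h`. The indicator of `{F ≤ 1}` is bounded
above by a continuous cutoff `ψ` supported in `{F ≤ 1 + δ}`, and below by `ψ ((1 + δ) • ·)`; the
scaled sum of the latter is, by homogeneity of `h`, a multiple close to `1` of that of the former
at the scale `L / (1 + δ)`. Thus no separate argument is needed for the measure of `{F = 1}`. -/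
lemma VagueConv.truncSum_nonneg [FiniteDimensional ℝ E] [MeasurableSpace E] [BorelSpace E]
    {μ : Measure E} [IsFiniteMeasureOnCompacts μ]
    {F : E → ℝ} (hF : IsPosHomogeneousFn F) {x : ℕ → E} {d C : ℝ} (hd : 0 < d)
    (hfin : ∀ R : ℝ, 0 < R → {i : ℕ | F (x i) ≤ R}.Finite) (hconv : VagueConv x d C μ)
    {h : E → ℝ} (hcont : Continuous h)
    (hhomog : ∀ t : ℝ, 0 < t → ∀ y : E, h (t • y) = t * h y) (hnn : ∀ y, 0 ≤ h y) :
    Tendsto (fun L : ℝ => L ^ (-(d + 1)) * truncSum F x h L) atTop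
      (𝓝 (C * ∫ y in {y | F y ≤ 1}, h y ∂μ)) := by
  obtain ⟨M, hM, hhM⟩ := hF.exists_abs_le hcont hhomog
  have hFc := hF.1
  set δ : ℕ → ℝ := fun n => 1 / ((n : ℝ) + 1) with hδdef
  have hδ : ∀ n, 0 < δ n := fun n => by positivity
  have hδ1 : ∀ n, δ n ≤ 1 := fun n => by
    simp only [hδdef]
    exact (div_le_one (by positivity)).2 (by linarith [Nat.cast_nonneg (α := ℝ) n])
  have hδ0 : Tendsto δ atTop (𝓝 0) := tendsto_one_div_add_atTop_nhds_zero_nat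
  set ψ : ℕ → E → ℝ := fun n y => max 0 (min 1 (1 - (F y - 1) / δ n)) with hψdef
  have hψ0 : ∀ n y, 0 ≤ ψ n y := fun n y => le_max_left _ _
  have hψ1 : ∀ n y, ψ n y ≤ 1 := fun n y => max_le zero_le_one (min_le_left _ _)
  have hψc : ∀ n, Continuous (ψ n) := fun n => by fun_prop
  have hψ_one : ∀ n y, F y ≤ 1 → ψ n y = 1 := by
    intro n y hy
    have : (F y - 1) / δ n ≤ 0 := div_nonpos_of_nonpos_of_nonneg (by linarith) (hδ n).le
    simp only [hψdef]
    rw [min_eq_left (by linarith), max_eq_right zero_le_one]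
  have hψ_supp : ∀ n y, ψ n y ≠ 0 → F y < 1 + δ n := by
    intro n y hy
    have h1 : 0 < ψ n y := lt_of_le_of_ne (hψ0 n y) hy.symm
    simp only [hψdef, lt_max_iff, lt_self_iff_false, false_or, lt_min_iff] at h1
    have := (div_lt_one (hδ n)).1 (by linarith [h1.2] : (F y - 1) / δ n < 1)
    linarith
  have hsupp : ∀ n y, h y * ψ n y ≠ 0 → F y ≤ 1 + δ n := fun n y hy =>
    (hψ_supp n y (right_ne_zero_of_mul hy)).le
  have hlim : ∀ n, Tendsto (scaledSum x d fun y => h y * ψ n y) atTop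
      (𝓝 (C * ∫ y, h y * ψ n y ∂μ)) := by
    intro n
    refine hconv.extend hF hd hfin (hcont.mul (hψc n)) hM (fun y => ?_) (hsupp n)
    rw [abs_mul, abs_of_nonneg (hψ0 n y)]
    exact (mul_le_of_le_one_right (abs_nonneg _) (hψ1 n y)).trans (hhM y)
  have hmeas : MeasurableSet {y | F y ≤ 1} := (isClosed_le hFc continuous_const).measurableSet
  have hint : Tendsto (fun n => C * ∫ y, h y * ψ n y ∂μ) atTop
      (𝓝 (C * ∫ y in {y | F y ≤ 1}, h y ∂μ)) := by
    rw [← integral_indicator hmeas]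
    refine Tendsto.const_mul C (tendsto_integral_of_dominated_convergence
      (indicator {y | F y ≤ 2} h)
      (fun n => (hcont.mul (hψc n)).aestronglyMeasurable)
      ((integrable_indicator_iff (isClosed_le hFc continuous_const).measurableSet).2
        (hcont.continuousOn.integrableOn_compact (hF.isCompact_le 2)))
      (fun n => ae_of_all _ fun y => ?_) (ae_of_all _ fun y => ?_))
    · rw [Real.norm_eq_abs, abs_of_nonneg (mul_nonneg (hnn y) (hψ0 n y))]
      by_cases hy : F y ≤ 2
      · rw [indicator_of_mem (by exact hy)]
        exact mul_le_of_le_one_right (hnn y) (hψ1 n y)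
      · rw [indicator_of_notMem (by exact hy)]
        by_contra hcon
        have := hsupp n y (fun h0 => hcon h0.le)
        linarith [hδ1 n]
    · by_cases hy : F y ≤ 1
      · rw [indicator_of_mem (by exact hy)]
        refine tendsto_const_nhds.congr fun n => ?_
        rw [hψ_one n y hy, mul_one]
      · rw [indicator_of_notMem (by exact hy)]
        refine tendsto_const_nhds.congr' ?_
        filter_upwards [hδ0.eventually_lt_const (sub_pos.2 (not_le.1 hy))] with n hn
        by_contra hcon
        have := hsupp n y (Ne.symm hcon)
        linarith
  have hpw : ∀ L : ℝ, 0 < L → L ^ (-(d + 1)) = L ^ (-d) * L⁻¹ := fun L hL => by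
    rw [neg_add, Real.rpow_add hL, Real.rpow_neg_one]
  have hupper : ∀ n, ∀ L : ℝ, 0 < L →
      L ^ (-(d + 1)) * truncSum F x h L ≤ scaledSum x d (fun y => h y * ψ n y) L := by
    intro n L hL
    rw [hpw L hL, mul_assoc, scaledSum, truncSum, ← tsum_mul_left]
    refine mul_le_mul_of_nonneg_left
      (((summable_trunc hfin h hL).mul_left _).tsum_le_tsum (fun i => ?_)
        (summable_scaled hF hfin (hsupp n) hL)) (Real.rpow_nonneg hL.le _)
    split_ifs with h1
    · rw [hψ_one n (L⁻¹ • x i), hhomog _ (inv_pos.2 hL), mul_one]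
      rw [hF.2.2 _ (inv_pos.2 hL), inv_mul_le_iff₀ hL, mul_one]
      exact h1
    · rw [mul_zero]
      exact mul_nonneg (hnn _) (hψ0 n _)
  have hlower : ∀ n, ∀ L : ℝ, 0 < L →
      (1 + δ n) ^ (-(d + 1)) * scaledSum x d (fun y => h y * ψ n y) ((1 + δ n)⁻¹ * L) ≤
        L ^ (-(d + 1)) * truncSum F x h L := by
    intro n L hL
    have hs : 0 < 1 + δ n := by linarith [hδ n]
    set L' : ℝ := (1 + δ n)⁻¹ * L with hL'def
    have hL' : 0 < L' := by positivity
    have hLL : L = (1 + δ n) * L' := by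
      rw [hL'def]
      field_simp
    have hsum : ∑' i, h (L'⁻¹ • x i) * ψ n (L'⁻¹ • x i) ≤ L'⁻¹ * truncSum F x h L := by
      rw [truncSum, ← tsum_mul_left]
      refine (summable_scaled hF hfin (hsupp n) hL').tsum_le_tsum (fun i => ?_)
        ((summable_trunc hfin h hL).mul_left _)
      rw [hhomog _ (inv_pos.2 hL'), mul_assoc]
      gcongr
      split_ifs with h1
      · exact mul_le_of_le_one_right (hnn _) (hψ1 n _)
      · have h0 : ψ n (L'⁻¹ • x i) = 0 := by
          by_contra hcon
          have h2 := hψ_supp n _ hcon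
          rw [hF.2.2 _ (inv_pos.2 hL'), inv_mul_lt_iff₀ hL', mul_comm, ← hLL] at h2
          exact h1 h2.le
        rw [h0, mul_zero]
    calc _ ≤ (1 + δ n) ^ (-(d + 1)) * (L' ^ (-d) * (L'⁻¹ * truncSum F x h L)) := by
          rw [scaledSum]
          gcongr
      _ = (1 + δ n) ^ (-(d + 1)) * L' ^ (-(d + 1)) * truncSum F x h L := by
          rw [hpw L' hL']
          ring
      _ = _ := by rw [← Real.mul_rpow hs.le hL'.le, ← hLL]
  rw [tendsto_order]
  constructor
  · intro a ha
    have h1 : Tendsto (fun n => (1 + δ n) ^ (-(d + 1)) * (C * ∫ y, h y * ψ n y ∂μ)) atTop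
        (𝓝 (C * ∫ y in {y | F y ≤ 1}, h y ∂μ)) := by
      have h2 : Tendsto (fun n => 1 + δ n) atTop (𝓝 1) := by simpa using hδ0.const_add 1
      have h3 := h2.rpow_const (p := -(d + 1)) (Or.inl one_ne_zero)
      simpa using h3.mul hint
    obtain ⟨n, hn⟩ := (h1.eventually_const_lt ha).exists
    have hs : 0 < 1 + δ n := by linarith [hδ n]
    have h2 := ((hlim n).comp (tendsto_id.const_mul_atTop (inv_pos.2 hs))).const_mul
      ((1 + δ n) ^ (-(d + 1)))
    filter_upwards [eventually_gt_atTop 0, h2.eventually_const_lt hn] with L hL h3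
    exact h3.trans_le (hlower n L hL)
  · intro a ha
    obtain ⟨n, hn⟩ := (hint.eventually_lt_const ha).exists
    filter_upwards [eventually_gt_atTop 0, (hlim n).eventually_lt_const hn] with L hL h3
    exact (hupper n L hL).trans_lt h3

/-! ### Convergence of the normalized averages -/

/-- (Abstract, finite-dimensional form of Theorem 1.1 of the
paper.) Suppose the rescaled counting measures `L^{-d} Σ_i δ_{x_i / L}`
converge weakly-* on `E \ {0}` to `C · μ` with `C > 0`, where `μ` is
homogeneous of degree `d > 0`, finite on compacts, null at `0`, and gives
positive mass to `{F ≤ 1}`. Then for every continuous function `h` which is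
positively homogeneous of degree one, the normalized averages converge:
`(Σ_{F(x_i) ≤ L} h(x_i)) / (Σ_{F(x_i) ≤ L} F(x_i)) → (∫_{F ≤ 1} h dμ) / (∫_{F ≤ 1} F dμ)`. -/
theorem normalized_average_convergence
    [FiniteDimensional ℝ E] [MeasurableSpace E] [BorelSpace E]
    (d : ℝ) (hd : 0 < d) (μ : Measure E) [IsFiniteMeasureOnCompacts μ]
    (hzero : μ {(0 : E)} = 0) (hhom : IsHomogeneousMeasure μ d)
    (F : E → ℝ) (hF : IsPosHomogeneousFn F)
    (hpos : 0 < μ {x : E | F x ≤ 1})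
    (C : ℝ) (hC : 0 < C) (x : ℕ → E)
    (hfin : ∀ R : ℝ, 0 < R → {i : ℕ | F (x i) ≤ R}.Finite)
    (hconv : ∀ g : E → ℝ, Continuous g → HasCompactSupport g →
      tsupport g ⊆ {(0 : E)}ᶜ →
      Tendsto (fun L : ℝ => L ^ (-d) * ∑' i : ℕ, g (L⁻¹ • x i)) atTop
        (𝓝 (C * ∫ y, g y ∂μ)))
    (h : E → ℝ) (hcont : Continuous h)
    (hhomog : ∀ t : ℝ, 0 < t → ∀ y : E, h (t • y) = t * h y) :
    Tendsto
      (fun L : ℝ =>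
        (∑' i : ℕ, if F (x i) ≤ L then h (x i) else 0) /
          (∑' i : ℕ, if F (x i) ≤ L then F (x i) else 0))
      atTop
      (𝓝 ((∫ y in {y : E | F y ≤ 1}, h y ∂μ) / ∫ y in {y : E | F y ≤ 1}, F y ∂μ)) := by
  have hv : VagueConv x d C μ := hconv
  have hFc := hF.1
  have hintF : IntegrableOn F {y | F y ≤ 1} μ :=
    hFc.continuousOn.integrableOn_compact (hF.isCompact_le 1)
  have hinth : IntegrableOn h {y | F y ≤ 1} μ :=
    hcont.continuousOn.integrableOn_compact (hF.isCompact_le 1)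
  obtain ⟨M, hM, hhM⟩ := hF.exists_abs_le hcont hhomog
  have limF := hv.truncSum_nonneg hF hd hfin hFc hF.2.2 hF.nonneg
  -- `h` may change sign, so it is written as `(h + M * F) - M * F`, both terms nonnegative.
  have limG := hv.truncSum_nonneg hF hd hfin (h := fun y => h y + M * F y) (by fun_prop)
    (fun t ht y => by simp only [hhomog t ht, hF.2.2 t ht]; ring)
    (fun y => by linarith [neg_abs_le (h y), hhM y])
  have limh : Tendsto (fun L : ℝ => L ^ (-(d + 1)) * truncSum F x h L) atTop
      (𝓝 (C * ∫ y in {y | F y ≤ 1}, h y ∂μ)) := by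
    have h1 := limG.sub (limF.const_mul M)
    rw [integral_add hinth (hintF.const_mul M), integral_const_mul] at h1
    have h2 : ∀ a b : ℝ, C * (a + M * b) - M * (C * b) = C * a := fun a b => by ring
    rw [h2] at h1
    refine h1.congr' ?_
    filter_upwards [eventually_gt_atTop 0] with L hL
    have h3 : truncSum F x (fun y => h y + M * F y) L =
        truncSum F x h L + M * truncSum F x F L := by
      simp only [truncSum]
      rw [← tsum_mul_left, ← (summable_trunc hfin h hL).tsum_add
        ((summable_trunc hfin F hL).mul_left M)]
      refine tsum_congr fun i => ?_
      split_ifs <;> simp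
    rw [h3]
    ring
  have hIF : 0 < ∫ y in {y : E | F y ≤ 1}, F y ∂μ := by
    rw [setIntegral_pos_iff_support_of_nonneg_ae (ae_of_all _ hF.nonneg) hintF]
    refine hpos.trans_le ?_
    calc μ {y | F y ≤ 1} ≤ μ ((Function.support F ∩ {y | F y ≤ 1}) ∪ {0}) :=
          measure_mono fun y hy => by
            by_cases h0 : y = 0
            · exact Or.inr h0
            · exact Or.inl ⟨(hF.2.1 y h0).ne', hy⟩
      _ ≤ _ := (measure_union_le _ _).trans (by rw [hzero, add_zero])
  have hdiv := limh.div limF (mul_pos hC hIF).ne'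
  rw [mul_div_mul_left _ _ hC.ne'] at hdiv
  refine hdiv.congr' ?_
  filter_upwards [eventually_gt_atTop 0] with L hL
  exact mul_div_mul_left _ _ (Real.rpow_pos_of_pos hL _).ne'
end
end
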